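/- arXiv:2412.07483 — 9 statements merged into one kernel-verified Lean document; each statement's English description precedes it below -/
import Mathlib

section
/- Let f = t0·t1·t2 + t0·t1·t3 + t0·t2·t3 + t1·t2·t3 in ℂ[t0,t1,t2,t3]. Then the set of points x ∈ ℂ⁴ at which all four partial derivatives of f vanish, {x ∈ ℂ⁴ : ∀ i, (∂ᵢ f)(x) = 0}, is exactly the union of the four coordinate axes ℂ·e0 ∪ ℂ·e1 ∪ ℂ·e2 ∪ ℂ·e3. (Hence the Cayley cubic surface {f = 0} ⊂ ℙ³ has exactly the four coordinate points as singular points, each an A1 singularity.) -/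
open MvPolynomial

noncomputable def cayleyCubic : MvPolynomial (Fin 4) ℂ :=
  X 0 * X 1 * X 2 + X 0 * X 1 * X 3 + X 0 * X 2 * X 3 + X 1 * X 2 * X 3

noncomputable def e (i : Fin 4) : Fin 4 → ℂ := Pi.single i 1

/-- The four quadrics force every pairwise product to vanish. -/
theorem cayley_aux (a b c d : ℂ) (h0 : b * c + b * d + c * d = 0)
    (h1 : a * c + a * d + c * d = 0) (h2 : a * b + a * d + b * d = 0)
    (h3 : a * b + a * c + b * c = 0) : a * b = 0 := by
  have h : a * b * c = 0 := by
    linear_combination (1/3) * (a * h0 + b * h1 + c * h2) - (2/3) * d * h3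
  have h' : (a * b) ^ 2 = 0 := by
    linear_combination a * b * h3 - (a + b) * h
  exact pow_eq_zero_iff (two_ne_zero) |>.mp h'

theorem mem_axis (i : Fin 4) (x : Fin 4 → ℂ) :
    x ∈ Submodule.span ℂ {e i} ↔ ∀ j, j ≠ i → x j = 0 := by
  rw [Submodule.mem_span_singleton]
  constructor
  · rintro ⟨a, rfl⟩ j hj
    simp [e, hj]
  · intro h
    refine ⟨x i, ?_⟩
    ext j
    by_cases hj : j = i
    · subst hj
      simp [e]
    · simp [e, hj, h j hj]

theorem cayleyCubic_singular_locus :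
    {x : Fin 4 → ℂ | ∀ i, eval x (pderiv i cayleyCubic) = 0} =
      (Submodule.span ℂ {e 0} : Set (Fin 4 → ℂ)) ∪
      (Submodule.span ℂ {e 1} : Set (Fin 4 → ℂ)) ∪
      (Submodule.span ℂ {e 2} : Set (Fin 4 → ℂ)) ∪
      (Submodule.span ℂ {e 3} : Set (Fin 4 → ℂ)) := by
  ext x
  simp only [Set.mem_ofPred_eq, Set.mem_union, SetLike.mem_coe, mem_axis, Fin.forall_fin_succ]
  simp [cayleyCubic, pderiv_X, Pi.single_apply]
  generalize x 0 = a
  generalize x 1 = b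
  generalize x 2 = c
  generalize x 3 = d
  constructor
  · rintro ⟨h0, h1, h2, h3⟩
    have ab := cayley_aux a b c d (by linear_combination h0) (by linear_combination h1)
      (by linear_combination h2) (by linear_combination h3)
    have ac := cayley_aux a c b d (by linear_combination h0) (by linear_combination h2)
      (by linear_combination h1) (by linear_combination h3)
    have ad := cayley_aux a d c b (by linear_combination h0) (by linear_combination h3)
      (by linear_combination h2) (by linear_combination h1)
    have bc := cayley_aux b c a d (by linear_combination h1) (by linear_combination h2)
      (by linear_combination h0) (by linear_combination h3)
    have bd := cayley_aux b d a c (by linear_combination h1) (by linear_combination h3)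
      (by linear_combination h0) (by linear_combination h2)
    have cd := cayley_aux c d a b (by linear_combination h2) (by linear_combination h3)
      (by linear_combination h0) (by linear_combination h1)
    simp only [mul_eq_zero] at ab ac ad bc bd cd
    tauto
  · rintro (((⟨h1, h2, h3⟩ | ⟨h1, h2, h3⟩) | ⟨h1, h2, h3⟩) | ⟨h1, h2, h3⟩) <;>
      simp [h1, h2, h3]
end

section
/- Let f = t0·t1·t2 + t0·t1·t3 + t0·t2·t3 + t1·t2·t3 in ℂ[t0,t1,t2,t3]. A 2-dimensional ℂ-subspace W ⊆ ℂ⁴ satisfies f(x) = 0 for all x ∈ W if and only if W is one of the following nine subspaces: the six 'edge' subspaces span{eᵢ, eⱼ} for 0 ≤ i < j ≤ 3, or the three 'joining' subspaces span{e0 − e1, e2 − e3}, span{e0 − e2, e1 − e3}, span{e0 − e3, e1 − e2}. (Hence the Cayley cubic contains exactly 9 lines: the six edges of the tetrahedron of singular points and the three lines joining pairs of opposite edges.) -/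
open MvPolynomial

theorem basis_aux (W : Submodule ℂ (Fin 4 → ℂ)) (hW : Module.finrank ℂ W = 2) :
    ∃ (i : Fin 4) (u v : Fin 4 → ℂ), u ∈ W ∧ v ∈ W ∧ u ≠ 0 ∧ u i = 0 ∧ v i = 1 ∧
      ∀ x ∈ W, ∃ s t : ℂ, x = s • u + t • v := by
  let b := Module.finBasisOfFinrankEq ℂ W hW
  have hx : ∀ x ∈ W, ∃ s t : ℂ, x = s • (b 0 : Fin 4 → ℂ) + t • (b 1 : Fin 4 → ℂ) := by
    intro x hx
    have h := b.sum_repr ⟨x, hx⟩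
    rw [Fin.sum_univ_two] at h
    exact ⟨_, _, (congrArg Subtype.val h).symm⟩
  have hli := b.linearIndependent
  have hb : (b : Fin 2 → W) = ![b 0, b 1] := by
    ext z : 1
    fin_cases z <;> rfl
  rw [hb, LinearIndependent.pair_iff' (b.ne_zero 0)] at hli
  have h0 : (b 0 : Fin 4 → ℂ) ≠ 0 := fun h => b.ne_zero 0 (Subtype.ext h)
  obtain ⟨i, hi⟩ := Function.ne_iff.mp h0
  simp only [Pi.zero_apply] at hi
  refine ⟨i, (b 1 : Fin 4 → ℂ) - ((b 1 : Fin 4 → ℂ) i / (b 0 : Fin 4 → ℂ) i) • (b 0 : Fin 4 → ℂ),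
    ((b 0 : Fin 4 → ℂ) i)⁻¹ • (b 0 : Fin 4 → ℂ), ?_, ?_, ?_, ?_, ?_, ?_⟩
  · exact W.sub_mem (b 1).2 (W.smul_mem _ (b 0).2)
  · exact W.smul_mem _ (b 0).2
  · intro h
    exact hli _ (Subtype.ext (sub_eq_zero.mp h).symm)
  · simp [hi]
  · simp [hi]
  · intro x hxW
    obtain ⟨s, t, rfl⟩ := hx x hxW
    refine ⟨t, s * (b 0 : Fin 4 → ℂ) i + t * (b 1 : Fin 4 → ℂ) i, ?_⟩
    ext k
    simp only [Pi.add_apply, Pi.smul_apply, Pi.sub_apply, smul_eq_mul]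
    field_simp
    ring

/-- The scalar computation: `u = (0, 0, p, q)`, `v = (1, c, m, n)`. -/
theorem scalar_aux (c p q m n : ℂ) (hpq : p ≠ 0 ∨ q ≠ 0)
    (h : ∀ s : ℂ, c * (s * p + m + (s * q + n)) + (1 + c) * ((s * p + m) * (s * q + n)) = 0) :
    (c = -1 ∧ p + q = 0 ∧ m + n = 0) ∨ (c = 0 ∧ p = 0 ∧ m = 0) ∨ (c = 0 ∧ q = 0 ∧ n = 0) := by
  have h0 := h 0
  have h1 := h 1
  have h2 := h (-1)
  have e2 : (1 + c) * (p * q) = 0 := by linear_combination (h1 + h2) / 2 - h0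
  have e1 : c * (p + q) + (1 + c) * (p * n + q * m) = 0 := by linear_combination (h1 - h2) / 2
  have e0 : c * (m + n) + (1 + c) * (m * n) = 0 := by linear_combination h0
  rcases mul_eq_zero.mp e2 with hc | hc
  · left
    have hc1 : c = -1 := by linear_combination hc
    subst hc1
    exact ⟨rfl, by linear_combination -e1, by linear_combination -e0⟩
  · right
    rcases mul_eq_zero.mp hc with hp | hq
    · left
      subst hp
      have hq : q ≠ 0 := by simpa using hpq
      have k : c + (1 + c) * m = 0 := by
        apply mul_left_cancel₀ hq
        linear_combination e1
      have k2 : c * m = 0 := by linear_combination e0 - n * k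
      rcases mul_eq_zero.mp k2 with h | h <;> subst h <;> simp at k <;> simp [k]
    · right
      subst hq
      have hp : p ≠ 0 := by simpa using hpq
      have k : c + (1 + c) * n = 0 := by
        apply mul_left_cancel₀ hp
        linear_combination e1
      have k2 : c * n = 0 := by linear_combination e0 - m * k
      rcases mul_eq_zero.mp k2 with h | h <;> subst h <;> simp at k <;> simp [k]

theorem core_aux (W : Submodule ℂ (Fin 4 → ℂ)) (i j k l : Fin 4)
    (hall : ∀ z : Fin 4, z = i ∨ z = j ∨ z = k ∨ z = l)
    (hf : ∀ x ∈ W, x i * x j * x k + x i * x j * x l + x i * x k * x l + x j * x k * x l = 0)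
    (u v : Fin 4 → ℂ) (hu : u ∈ W) (hv : v ∈ W) (hu0 : u ≠ 0) (hui : u i = 0) (hvi : v i = 1)
    (hspan : ∀ x ∈ W, ∃ s t : ℂ, x = s • u + t • v) (huj : u j = 0) :
    (∀ x ∈ W, x i + x j = 0 ∧ x k + x l = 0) ∨ (∀ x ∈ W, x j = 0 ∧ x k = 0) ∨
      (∀ x ∈ W, x j = 0 ∧ x l = 0) := by
  have hkl : u k ≠ 0 ∨ u l ≠ 0 := by
    by_contra! hcon
    apply hu0
    ext z
    rcases hall z with rfl | rfl | rfl | rfl <;> simp [*]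
  have key := scalar_aux (v j) (u k) (u l) (v k) (v l) hkl (by
    intro s
    have := hf (s • u + v) (W.add_mem (W.smul_mem s hu) hv)
    simp only [Pi.add_apply, Pi.smul_apply, smul_eq_mul, hui, huj, hvi] at this
    linear_combination this)
  rcases key with ⟨h1, h2, h3⟩ | ⟨h1, h2, h3⟩ | ⟨h1, h2, h3⟩
  · left
    intro x hx
    obtain ⟨s, t, rfl⟩ := hspan x hx
    simp only [Pi.add_apply, Pi.smul_apply, smul_eq_mul, hui, huj, hvi, h1]
    exact ⟨by ring, by linear_combination s * h2 + t * h3⟩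
  · right; left
    intro x hx
    obtain ⟨s, t, rfl⟩ := hspan x hx
    simp [*]
  · right; right
    intro x hx
    obtain ⟨s, t, rfl⟩ := hspan x hx
    simp [*]

theorem core_all (W : Submodule ℂ (Fin 4 → ℂ)) (i j k l : Fin 4)
    (hall : ∀ z : Fin 4, z = i ∨ z = j ∨ z = k ∨ z = l)
    (hf : ∀ x ∈ W, x i * x j * x k + x i * x j * x l + x i * x k * x l + x j * x k * x l = 0)
    (u v : Fin 4 → ℂ) (hu : u ∈ W) (hv : v ∈ W) (hu0 : u ≠ 0) (hui : u i = 0) (hvi : v i = 1)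
    (hspan : ∀ x ∈ W, ∃ s t : ℂ, x = s • u + t • v) :
    (∀ x ∈ W, x i + x j = 0 ∧ x k + x l = 0) ∨ (∀ x ∈ W, x i + x k = 0 ∧ x j + x l = 0) ∨
    (∀ x ∈ W, x i + x l = 0 ∧ x j + x k = 0) ∨ (∀ x ∈ W, x j = 0 ∧ x k = 0) ∨
      (∀ x ∈ W, x j = 0 ∧ x l = 0) ∨ (∀ x ∈ W, x k = 0 ∧ x l = 0) := by
  have h := hf u hu
  simp only [hui, zero_mul, zero_add, mul_eq_zero] at h
  rcases h with (h | h) | h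
  · rcases core_aux W i j k l hall hf u v hu hv hu0 hui hvi hspan h with h | h | h <;> tauto
  · rcases core_aux W i k j l (fun z => by have := hall z; tauto)
      (fun x hx => by linear_combination hf x hx) u v hu hv hu0 hui hvi hspan h with h | h | h
    · tauto
    · have := fun x hx => (h x hx).symm
      tauto
    · tauto
  · rcases core_aux W i l j k (fun z => by have := hall z; tauto)
      (fun x hx => by linear_combination hf x hx) u v hu hv hu0 hui hvi hspan h with h | h | h
    · tauto
    · have := fun x hx => (h x hx).symm
      tauto
    · have := fun x hx => (h x hx).symm
      tauto

theorem eq_span_aux (W : Submodule ℂ (Fin 4 → ℂ)) (hW : Module.finrank ℂ W = 2)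
    (a b : Fin 4 → ℂ) (h : ∀ x ∈ W, ∃ s t : ℂ, s • a + t • b = x) :
    W = Submodule.span ℂ {a, b} := by
  apply Submodule.eq_of_le_of_finrank_le
  · intro x hx
    exact Submodule.mem_span_pair.mpr (h x hx)
  · rw [hW]
    classical
    have := finrank_span_finset_le_card (R := ℂ) ({a, b} : Finset (Fin 4 → ℂ))
    have h2 := Finset.card_le_two (a := a) (b := b)
    rw [Finset.coe_pair] at this
    exact this.trans h2

theorem eval_aux (x : Fin 4 → ℂ) : eval x cayleyCubic =
    x 0 * x 1 * x 2 + x 0 * x 1 * x 3 + x 0 * x 2 * x 3 + x 1 * x 2 * x 3 := by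
  simp [cayleyCubic]

theorem edge_aux (W : Submodule ℂ (Fin 4 → ℂ)) (hW : Module.finrank ℂ W = 2) (i j k l : Fin 4)
    (hall : i ≠ j ∧ i ≠ k ∧ i ≠ l ∧ j ≠ k ∧ j ≠ l ∧ k ≠ l)
    (hz : ∀ z : Fin 4, z = i ∨ z = j ∨ z = k ∨ z = l)
    (h : ∀ x ∈ W, x k = 0 ∧ x l = 0) : W = Submodule.span ℂ {e i, e j} := by
  apply eq_span_aux W hW
  intro x hx
  obtain ⟨h1, h2⟩ := h x hx
  obtain ⟨a1, a2, a3, a4, a5, a6⟩ := hall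
  refine ⟨x i, x j, ?_⟩
  ext z
  rcases hz z with rfl | rfl | rfl | rfl <;> simp [e, Pi.single_apply, *, Ne.symm]

theorem join_aux (W : Submodule ℂ (Fin 4 → ℂ)) (hW : Module.finrank ℂ W = 2) (i j k l : Fin 4)
    (hall : i ≠ j ∧ i ≠ k ∧ i ≠ l ∧ j ≠ k ∧ j ≠ l ∧ k ≠ l)
    (hz : ∀ z : Fin 4, z = i ∨ z = j ∨ z = k ∨ z = l)
    (h : ∀ x ∈ W, x i + x j = 0 ∧ x k + x l = 0) :
    W = Submodule.span ℂ {e i - e j, e k - e l} := by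
  apply eq_span_aux W hW
  intro x hx
  obtain ⟨h1, h2⟩ := h x hx
  have hj1 : x j = - x i := by linear_combination h1
  have hl2 : x l = - x k := by linear_combination h2
  obtain ⟨a1, a2, a3, a4, a5, a6⟩ := hall
  refine ⟨x i, x k, ?_⟩
  ext z
  rcases hz z with rfl | rfl | rfl | rfl <;>
    simp [e, Pi.single_apply, a1, a2, a3, a4, a5, a6, a1.symm, a2.symm, a3.symm, a4.symm,
      a5.symm, a6.symm, hj1, hl2]

theorem nine_aux (W : Submodule ℂ (Fin 4 → ℂ)) (hW : Module.finrank ℂ W = 2)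
    (hf : ∀ x ∈ W, eval x cayleyCubic = 0) :
    (∀ x ∈ W, x 2 = 0 ∧ x 3 = 0) ∨ (∀ x ∈ W, x 1 = 0 ∧ x 3 = 0) ∨
    (∀ x ∈ W, x 1 = 0 ∧ x 2 = 0) ∨ (∀ x ∈ W, x 0 = 0 ∧ x 3 = 0) ∨
    (∀ x ∈ W, x 0 = 0 ∧ x 2 = 0) ∨ (∀ x ∈ W, x 0 = 0 ∧ x 1 = 0) ∨
    (∀ x ∈ W, x 0 + x 1 = 0 ∧ x 2 + x 3 = 0) ∨ (∀ x ∈ W, x 0 + x 2 = 0 ∧ x 1 + x 3 = 0) ∨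
    (∀ x ∈ W, x 0 + x 3 = 0 ∧ x 1 + x 2 = 0) := by
  simp only [eval_aux] at hf
  obtain ⟨i, u, v, hu, hv, hu0, hui, hvi, hspan⟩ := basis_aux W hW
  have hi : i = 0 ∨ i = 1 ∨ i = 2 ∨ i = 3 := by
    have hall : ∀ i : Fin 4, i = 0 ∨ i = 1 ∨ i = 2 ∨ i = 3 := by decide
    exact hall i
  rcases hi with rfl | rfl | rfl | rfl
  · have := core_all W 0 1 2 3 (by decide) hf u v hu hv hu0 hui hvi hspan
    tauto
  · have := core_all W 1 0 3 2 (by decide) (fun x hx => by linear_combination hf x hx)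
      u v hu hv hu0 hui hvi hspan
    simp only [and_comm, add_comm] at this ⊢
    tauto
  · have := core_all W 2 3 0 1 (by decide) (fun x hx => by linear_combination hf x hx)
      u v hu hv hu0 hui hvi hspan
    simp only [and_comm, add_comm] at this ⊢
    tauto
  · have := core_all W 3 2 1 0 (by decide) (fun x hx => by linear_combination hf x hx)
      u v hu hv hu0 hui hvi hspan
    simp only [and_comm, add_comm] at this ⊢
    tauto

theorem cayleyCubic_lines (W : Submodule ℂ (Fin 4 → ℂ)) (hW : Module.finrank ℂ W = 2) :
    (∀ x ∈ W, eval x cayleyCubic = 0) ↔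
      W = Submodule.span ℂ {e 0, e 1} ∨
      W = Submodule.span ℂ {e 0, e 2} ∨
      W = Submodule.span ℂ {e 0, e 3} ∨
      W = Submodule.span ℂ {e 1, e 2} ∨
      W = Submodule.span ℂ {e 1, e 3} ∨
      W = Submodule.span ℂ {e 2, e 3} ∨
      W = Submodule.span ℂ {e 0 - e 1, e 2 - e 3} ∨
      W = Submodule.span ℂ {e 0 - e 2, e 1 - e 3} ∨
      W = Submodule.span ℂ {e 0 - e 3, e 1 - e 2} := by
  constructor
  · intro hf
    rcases nine_aux W hW hf with h | h | h | h | h | h | h | h | h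
    · exact Or.inl (edge_aux W hW 0 1 2 3 (by decide) (by decide) h)
    · exact Or.inr (Or.inl (edge_aux W hW 0 2 1 3 (by decide) (by decide) h))
    · exact Or.inr (Or.inr (Or.inl (edge_aux W hW 0 3 1 2 (by decide) (by decide) h)))
    · have := edge_aux W hW 1 2 0 3 (by decide) (by decide) h
      tauto
    · have := edge_aux W hW 1 3 0 2 (by decide) (by decide) h
      tauto
    · have := edge_aux W hW 2 3 0 1 (by decide) (by decide) h
      tauto
    · have := join_aux W hW 0 1 2 3 (by decide) (by decide) h
      tauto
    · have := join_aux W hW 0 2 1 3 (by decide) (by decide) h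
      tauto
    · have := join_aux W hW 0 3 1 2 (by decide) (by decide) h
      tauto
  · intro h x hx
    rw [eval_aux]
    rcases h with rfl | rfl | rfl | rfl | rfl | rfl | rfl | rfl | rfl <;>
      obtain ⟨s, t, rfl⟩ := Submodule.mem_span_pair.mp hx <;>
      simp [e, Pi.single_apply] <;> ring
end

section
/- Let g = t0·t2·t3 − t1²·t3 − t0·t1² in ℂ[t0,t1,t2,t3]. Then the set of points x ∈ ℂ⁴ at which all four partial derivatives of g vanish, {x ∈ ℂ⁴ : ∀ i, (∂ᵢ g)(x) = 0}, is exactly ℂ·e0 ∪ ℂ·e2 ∪ ℂ·e3. (Hence the cubic surface {g = 0} ⊂ ℙ³ of type 2A1A3 has exactly three singular points: P0 = (1:0:0:0) and P3 = (0:0:0:1) of type A1, and P2 = (0:0:1:0) of type A3.) -/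
open MvPolynomial

noncomputable def cubic2A1A3 : MvPolynomial (Fin 4) ℂ :=
  X 0 * X 2 * X 3 - X 1 ^ 2 * X 3 - X 0 * X 1 ^ 2

theorem cubic2A1A3_singular_locus :
    {x : Fin 4 → ℂ | ∀ i, eval x (pderiv i cubic2A1A3) = 0} =
      (Submodule.span ℂ {e 0} : Set (Fin 4 → ℂ)) ∪
      (Submodule.span ℂ {e 2} : Set (Fin 4 → ℂ)) ∪
      (Submodule.span ℂ {e 3} : Set (Fin 4 → ℂ)) := by
  ext x
  have p0 : eval x (pderiv 0 cubic2A1A3) = x 2 * x 3 - x 1 ^ 2 := by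
    simp [cubic2A1A3, pderiv_X, Pi.single_apply]; try ring
  have p1 : eval x (pderiv 1 cubic2A1A3) = - (2 * x 1 * x 3) - 2 * x 0 * x 1 := by
    simp [cubic2A1A3, pderiv_X, Pi.single_apply]; try ring
  have p2 : eval x (pderiv 2 cubic2A1A3) = x 0 * x 3 := by
    simp [cubic2A1A3, pderiv_X, Pi.single_apply]; try ring
  have p3 : eval x (pderiv 3 cubic2A1A3) = x 0 * x 2 - x 1 ^ 2 := by
    simp [cubic2A1A3, pderiv_X, Pi.single_apply]; try ring
  simp only [Set.mem_setOf_eq, Set.mem_union, SetLike.mem_coe, Submodule.mem_span_singleton,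
    Fin.forall_fin_succ, Fin.isValue]
  constructor
  · rintro ⟨h0, -, h2, h3, -⟩
    replace h0 := p0.symm.trans h0
    replace h2 := p2.symm.trans h2
    replace h3 := p3.symm.trans h3
    have h1 : x 1 = 0 := by
      rcases mul_eq_zero.mp h2 with h | h
      · simpa [h] using h3
      · simpa [h] using h0
    have h23 : x 2 * x 3 = 0 := by simpa [h1] using h0
    have h02 : x 0 * x 2 = 0 := by simpa [h1] using h3
    by_cases a : x 0 = 0
    · rcases mul_eq_zero.mp h23 with b | b
      · right
        refine ⟨x 3, ?_⟩
        ext i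
        fin_cases i <;> simp [e, a, b, h1]
      · left; right
        refine ⟨x 2, ?_⟩
        ext i
        fin_cases i <;> simp [e, a, b, h1]
    · left; left
      have b : x 2 = 0 := by simpa [a] using h02
      have c : x 3 = 0 := by simpa [a] using h2
      refine ⟨x 0, ?_⟩
      ext i
      fin_cases i <;> simp [e, b, c, h1]
  · intro h
    refine ⟨p0.trans ?_, p1.trans ?_, p2.trans ?_, p3.trans ?_, fun i => i.elim0⟩ <;>
    rcases h with (⟨c, rfl⟩ | ⟨c, rfl⟩) | ⟨c, rfl⟩ <;> simp [e]
end

section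
/- Let g = t0·t2·t3 − t1²·t3 − t0·t1² in ℂ[t0,t1,t2,t3]. A 2-dimensional ℂ-subspace W ⊆ ℂ⁴ satisfies g(x) = 0 for all x ∈ W if and only if W is one of the following five subspaces: span{e2, e3}, span{e0, e2}, span{e0, e3}, span{e1, e2}, span{e0 − e3, e1}. (Hence the cubic surface of type 2A1A3 contains exactly 5 lines: R23 = {t0 = t1 = 0}, R02 = {t1 = t3 = 0}, R03 = {t1 = t2 = 0}, L1 = {t0 = t3 = 0}, and L2 = {t2 = t0 + t3 = 0}.) -/
open MvPolynomial

theorem eval_cubic_eq (x : Fin 4 → ℂ) :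
    eval x cubic2A1A3 = x 0 * x 2 * x 3 - x 1 ^ 2 * x 3 - x 0 * x 1 ^ 2 := by
  simp [cubic2A1A3]

theorem eq_span_of_le (W : Submodule ℂ (Fin 4 → ℂ)) (hW : Module.finrank ℂ W = 2)
    (x y : Fin 4 → ℂ) (h : ∀ w ∈ W, ∃ a b : ℂ, a • x + b • y = w) :
    W = Submodule.span ℂ {x, y} := by
  apply Submodule.eq_of_le_of_finrank_le
  · intro w hw
    exact Submodule.mem_span_pair.2 (h w hw)
  · rw [hW]
    classical
    have := finrank_span_finset_le_card (R := ℂ) ({x, y} : Finset (Fin 4 → ℂ))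
    have h2 : ({x, y} : Finset (Fin 4 → ℂ)).card ≤ 2 := Finset.card_le_two
    simp only [Finset.coe_insert, Finset.coe_singleton] at this
    exact this.trans h2

/-- The parameters of a line through `(1,p,q,r)` and a nonzero `(0,a,b,c)`. -/
theorem param_cases (p q r a b c : ℂ) (hne : ¬ (a = 0 ∧ b = 0 ∧ c = 0))
    (hu : a ^ 2 * c = 0)
    (h : ∀ s : ℂ, (q + s * b) * (r + s * c) - (p + s * a) ^ 2 * (r + s * c)
      - (p + s * a) ^ 2 = 0) :
    (p = 0 ∧ r = 0 ∧ a = 0 ∧ c = 0) ∨ (p = 0 ∧ q = 0 ∧ a = 0 ∧ b = 0) ∨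
      (q = 0 ∧ r = -1 ∧ b = 0 ∧ c = 0) := by
  have h0 := h 0
  have h1 := h 1
  have h2 := h (-1)
  by_cases ha : a = 0
  · subst ha
    have hbc : b * c = 0 := by linear_combination (h1 + h2) / 2 - h0
    have hl : b * r + q * c - p ^ 2 * c = 0 := by linear_combination (h1 - h2) / 2
    rcases mul_eq_zero.1 hbc with hb | hc
    · subst hb
      have hc : c ≠ 0 := fun hc => hne ⟨rfl, rfl, hc⟩
      have hq : q - p ^ 2 = 0 := by
        apply (mul_eq_zero.1 (_ : (q - p ^ 2) * c = 0)).resolve_right hc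
        linear_combination hl
      have hp : p ^ 2 = 0 := by linear_combination r * hq - h0
      have hp' : p = 0 := by simpa using hp
      right; left
      refine ⟨hp', ?_, rfl, rfl⟩
      linear_combination hq + hp
    · subst hc
      have hb : b ≠ 0 := fun hb => hne ⟨rfl, hb, rfl⟩
      have hr : r = 0 := by
        apply (mul_eq_zero.1 (_ : b * r = 0)).resolve_left hb
        linear_combination hl
      subst hr
      have hp : p ^ 2 = 0 := by linear_combination - h0
      left
      exact ⟨by simpa using hp, rfl, rfl, rfl⟩
  · have hc : c = 0 := (mul_eq_zero.1 hu).resolve_left (pow_ne_zero 2 ha)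
    subst hc
    have hr : r + 1 = 0 := by
      apply (mul_eq_zero.1 (_ : a ^ 2 * (r + 1) = 0)).resolve_left (pow_ne_zero 2 ha)
      linear_combination h0 - (h1 + h2) / 2
    have hr' : r = -1 := by linear_combination hr
    subst hr'
    right; right
    refine ⟨?_, rfl, ?_, rfl⟩
    · linear_combination - h0
    · linear_combination - (h1 - h2) / 2

theorem cubic2A1A3_lines (W : Submodule ℂ (Fin 4 → ℂ)) (hW : Module.finrank ℂ W = 2) :
    (∀ x ∈ W, eval x cubic2A1A3 = 0) ↔
      W = Submodule.span ℂ {e 2, e 3} ∨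
      W = Submodule.span ℂ {e 0, e 2} ∨
      W = Submodule.span ℂ {e 0, e 3} ∨
      W = Submodule.span ℂ {e 1, e 2} ∨
      W = Submodule.span ℂ {e 0 - e 3, e 1} := by
  simp only [eval_cubic_eq]
  constructor
  · intro H
    by_cases hz : ∀ w ∈ W, w 0 = 0
    · have H' : ∀ w ∈ W, w 1 ≠ 0 → w 3 = 0 := by
        intro w hw h1
        have := H w hw
        rw [hz w hw] at this
        apply (mul_eq_zero.1 (_ : w 1 ^ 2 * w 3 = 0)).resolve_left (pow_ne_zero 2 h1)
        linear_combination - this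
      by_cases h1 : ∀ w ∈ W, w 1 = 0
      · left
        apply eq_span_of_le W hW
        intro w hw
        refine ⟨w 2, w 3, ?_⟩
        have := hz w hw
        have := h1 w hw
        ext i; fin_cases i <;> simp [e, *]
      · push Not at h1
        obtain ⟨x, hx, hx1⟩ := h1
        have hx3 := H' x hx hx1
        have h3 : ∀ w ∈ W, w 3 = 0 := by
          intro w hw
          by_cases hw1 : w 1 = 0
          · have := H' (x + w) (W.add_mem hx hw) (by simpa [hw1] using hx1)
            simpa [hx3] using this
          · exact H' w hw hw1
        right; right; right; left
        apply eq_span_of_le W hW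
        intro w hw
        refine ⟨w 1, w 2, ?_⟩
        have := hz w hw
        have := h3 w hw
        ext i; fin_cases i <;> simp [e, *]
    · push Not at hz
      obtain ⟨v', hv', hv'0⟩ := hz
      obtain ⟨v, hv, hv0⟩ : ∃ v ∈ W, v 0 = 1 :=
        ⟨(v' 0)⁻¹ • v', W.smul_mem _ hv', by simp [hv'0]⟩
      obtain ⟨u, hu, hu0, hune⟩ : ∃ u ∈ W, u 0 = 0 ∧ u ≠ 0 := by
        by_contra hcon
        push Not at hcon
        have hle : W ≤ Submodule.span ℂ {v} := by
          intro w hw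
          have := hcon (w - w 0 • v) (W.sub_mem hw (W.smul_mem _ hv)) (by simp [hv0])
          exact Submodule.mem_span_singleton.2 ⟨w 0, (sub_eq_zero.1 this).symm⟩
        have h1 := Submodule.finrank_mono hle
        have h2 : Module.finrank ℂ (Submodule.span ℂ {v}) ≤ 1 := by
          simpa using finrank_span_le_card (R := ℂ) ({v} : Set (Fin 4 → ℂ))
        omega
      have hWs : Submodule.span ℂ {v, u} = W := by
        apply Submodule.eq_of_le_of_finrank_eq
        · rw [Submodule.span_le]
          rintro z (rfl | rfl)
          · exact hv
          · exact hu
        · have hli : LinearIndependent ℂ ![v, u] := by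
            rw [LinearIndependent.pair_iff]
            intro s t hst
            have hs : s = 0 := by simpa [hv0, hu0] using congrFun hst 0
            subst hs
            simpa [hune] using hst
          have := finrank_span_eq_card hli
          rw [hW]
          have hr : Set.range ![v, u] = {v, u} := by
            simp [Matrix.range_cons, Set.pair_comm]
          rw [hr] at this
          simpa using this
      have hmem : ∀ w ∈ W, ∃ s t : ℂ, s • v + t • u = w := by
        intro w hw
        rw [← hWs] at hw
        exact Submodule.mem_span_pair.1 hw
      have key := param_cases (v 1) (v 2) (v 3) (u 1) (u 2) (u 3)
        (by
          rintro ⟨h1, h2, h3⟩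
          apply hune
          ext i; fin_cases i <;> simp [*])
        (by
          have := H u hu
          rw [hu0] at this
          linear_combination - this)
        (by
          intro s
          have := H (v + s • u) (W.add_mem hv (W.smul_mem s hu))
          simp only [Pi.add_apply, Pi.smul_apply, smul_eq_mul, hv0, hu0] at this
          linear_combination this)
      rcases key with ⟨k1, k2, k3, k4⟩ | ⟨k1, k2, k3, k4⟩ | ⟨k1, k2, k3, k4⟩
      · right; left
        apply eq_span_of_le W hW
        intro w hw
        obtain ⟨s, t, rfl⟩ := hmem w hw
        refine ⟨s, s * v 2 + t * u 2, ?_⟩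
        ext i; fin_cases i <;> simp [e, *]
      · right; right; left
        apply eq_span_of_le W hW
        intro w hw
        obtain ⟨s, t, rfl⟩ := hmem w hw
        refine ⟨s, s * v 3 + t * u 3, ?_⟩
        ext i; fin_cases i <;> simp [e, *]
      · right; right; right; right
        apply eq_span_of_le W hW
        intro w hw
        obtain ⟨s, t, rfl⟩ := hmem w hw
        refine ⟨s, s * v 1 + t * u 1, ?_⟩
        ext i; fin_cases i <;> simp [e, *]
  · rintro (rfl | rfl | rfl | rfl | rfl) x hx <;>
      obtain ⟨s, t, rfl⟩ := Submodule.mem_span_pair.1 hx <;> simp [e] <;> ring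
end

section
/- Let h = t3·(t0·t2 − t1²) + t0³ in ℂ[t0,t1,t2,t3]. Then the set of points x ∈ ℂ⁴ at which all four partial derivatives of h vanish, {x ∈ ℂ⁴ : ∀ i, (∂ᵢ h)(x) = 0}, is exactly ℂ·e2 ∪ ℂ·e3. (Hence the cubic surface {h = 0} ⊂ ℙ³ of type A1A5 has exactly two singular points: (0:0:0:1) of type A5 and (0:0:1:0) of type A1.) -/
open MvPolynomial

noncomputable def cubicA1A5 : MvPolynomial (Fin 4) ℂ :=
  X 3 * (X 0 * X 2 - X 1 ^ 2) + X 0 ^ 3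

theorem cubicA1A5_singular_locus :
    {x : Fin 4 → ℂ | ∀ i, eval x (pderiv i cubicA1A5) = 0} =
      (Submodule.span ℂ {e 2} : Set (Fin 4 → ℂ)) ∪
      (Submodule.span ℂ {e 3} : Set (Fin 4 → ℂ)) := by
  ext x
  simp only [Set.mem_setOf_eq, Set.mem_union, SetLike.mem_coe, Submodule.mem_span_singleton]
  have h0 : eval x (pderiv 0 cubicA1A5) = x 3 * x 2 + 3 * x 0 ^ 2 := by
    simp [cubicA1A5, pderiv_X, Pi.single_apply]
  have h1 : eval x (pderiv 1 cubicA1A5) = -2 * x 1 * x 3 := by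
    simp [cubicA1A5, pderiv_X, Pi.single_apply]
    try ring
  have h2 : eval x (pderiv 2 cubicA1A5) = x 3 * x 0 := by
    simp [cubicA1A5, pderiv_X, Pi.single_apply]
  have h3 : eval x (pderiv 3 cubicA1A5) = x 0 * x 2 - x 1 ^ 2 := by
    simp [cubicA1A5, pderiv_X, Pi.single_apply]
  constructor
  · intro h
    have a0 := h 0
    have a1 := h 1
    have a2 := h 2
    have a3 := h 3
    rw [h0] at a0
    rw [h1] at a1
    rw [h2] at a2
    rw [h3] at a3
    by_cases ht : x 3 = 0
    · left
      have b0 : x 0 = 0 := by simpa [ht] using a0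
      have b1 : x 1 = 0 := by simpa [b0] using a3
      refine ⟨x 2, ?_⟩
      ext i
      fin_cases i <;> simp [e, Pi.single_apply, ht, b0, b1]
    · right
      have b0 : x 0 = 0 := by simpa [ht] using a2
      have b1 : x 1 = 0 := by simpa [b0] using a3
      have b2 : x 2 = 0 := by simpa [ht, b0] using a0
      refine ⟨x 3, ?_⟩
      ext i
      fin_cases i <;> simp [e, Pi.single_apply, b0, b1, b2]
  · intro h i
    have key : x 0 = 0 ∧ x 1 = 0 ∧ x 3 * x 2 = 0 := by
      rcases h with ⟨a, rfl⟩ | ⟨a, rfl⟩ <;> simp [e, Pi.single_apply]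
    obtain ⟨c0, c1, c2⟩ := key
    fin_cases i
    · exact h0.trans (by simp [c0, c2])
    · exact h1.trans (by simp [c1])
    · exact h2.trans (by simp [c0])
    · exact h3.trans (by simp [c0, c1])
end

section
/- Let h = t3·(t0·t2 − t1²) + t0³ in ℂ[t0,t1,t2,t3]. A 2-dimensional ℂ-subspace W ⊆ ℂ⁴ satisfies h(x) = 0 for all x ∈ W if and only if W = span{e2, e3} or W = span{e1, e2}. (Hence the cubic surface of type A1A5 contains exactly 2 lines: L1 = {t0 = t1 = 0}, which passes through both singular points, and L2 = {t0 = t3 = 0}, which meets the singular locus only in the A5 point.) -/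
open MvPolynomial

lemma eval_cubic (x : Fin 4 → ℂ) :
    eval x cubicA1A5 = x 3 * (x 0 * x 2 - x 1 ^ 2) + x 0 ^ 3 := by
  simp [cubicA1A5]

lemma finrank_span_e_le (i j : Fin 4) :
    Module.finrank ℂ (Submodule.span ℂ ({e i, e j} : Set (Fin 4 → ℂ))) ≤ 2 := by
  classical
  have h := finrank_span_finset_le_card (R := ℂ) ({e i, e j} : Finset (Fin 4 → ℂ))
  have h2 : ({e i, e j} : Finset (Fin 4 → ℂ)).card ≤ 2 := Finset.card_le_two
  rw [Set.finrank] at h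
  rw [Finset.coe_pair] at h
  exact h.trans h2

lemma x0_eq_zero (W : Submodule ℂ (Fin 4 → ℂ)) (hW : Module.finrank ℂ W = 2)
    (h : ∀ x ∈ W, x 3 * (x 0 * x 2 - x 1 ^ 2) + x 0 ^ 3 = 0) (v : Fin 4 → ℂ) (hv : v ∈ W) :
    v 0 = 0 := by
  by_contra hv0
  have key : ∀ x ∈ W, x 3 = 0 → x 0 = 0 := by
    intro x hx h3
    have := h x hx
    simpa [h3] using this
  have hv3 : v 3 ≠ 0 := fun h3 => hv0 (key v hv h3)
  obtain ⟨w, hw, hw0, hne⟩ : ∃ w ∈ W, w 0 = 0 ∧ w ≠ 0 := by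
    let f : W →ₗ[ℂ] ℂ := (LinearMap.proj 0 : (Fin 4 → ℂ) →ₗ[ℂ] ℂ) ∘ₗ W.subtype
    have hk : LinearMap.ker f ≠ ⊥ := LinearMap.ker_ne_bot_of_finrank_lt (by simp [hW])
    obtain ⟨w, hw, hne⟩ := Submodule.exists_mem_ne_zero_of_ne_bot hk
    exact ⟨w, w.2, by simpa [f] using hw, by simpa using hne⟩
  have hw3 : w 3 = 0 := by
    have := key (v 3 • w - w 3 • v) (W.sub_mem (W.smul_mem _ hw) (W.smul_mem _ hv))
      (by simp; ring)
    simpa [hw0, hv0] using this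
  have h0 := h v hv
  have h1 := h (v + w) (W.add_mem hv hw)
  have h2 := h (v - w) (W.sub_mem hv hw)
  simp only [Pi.add_apply, Pi.sub_apply, hw0, hw3, add_zero, sub_zero] at h1 h2
  have hw1 : w 1 = 0 := by
    have : v 3 * (w 1) ^ 2 = 0 := by linear_combination h0 - h1 / 2 - h2 / 2
    simpa [hv3] using this
  have hw2 : w 2 = 0 := by
    rw [hw1] at h1
    have : v 3 * (v 0 * w 2) = 0 := by linear_combination h1 - h0
    simpa [hv3, hv0] using this
  apply hne
  ext i
  fin_cases i <;> simp [hw0, hw1, hw2, hw3]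

theorem cubicA1A5_lines (W : Submodule ℂ (Fin 4 → ℂ)) (hW : Module.finrank ℂ W = 2) :
    (∀ x ∈ W, eval x cubicA1A5 = 0) ↔
      W = Submodule.span ℂ {e 2, e 3} ∨ W = Submodule.span ℂ {e 1, e 2} := by
  simp only [eval_cubic]
  constructor
  · intro h
    have hx0 := x0_eq_zero W hW h
    have h13 : ∀ x ∈ W, x 3 = 0 ∨ x 1 = 0 := by
      intro x hx
      have := h x hx
      simpa [hx0 x hx] using this
    by_cases hall : ∀ x ∈ W, x 1 = 0
    · left
      refine Submodule.eq_of_le_of_finrank_le (fun x hx => ?_) (hW ▸ finrank_span_e_le 2 3)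
      rw [Submodule.mem_span_pair]
      refine ⟨x 2, x 3, ?_⟩
      ext i
      fin_cases i <;> simp [e, hx0 x hx, hall x hx]
    · right
      push Not at hall
      obtain ⟨a, ha, ha1⟩ := hall
      have ha3 : a 3 = 0 := (h13 a ha).resolve_right ha1
      have hall3 : ∀ x ∈ W, x 3 = 0 := by
        intro x hx
        by_contra hx3
        have hx1 : x 1 = 0 := (h13 x hx).resolve_left hx3
        have := h13 (a + x) (W.add_mem ha hx)
        simp [ha3, hx1, ha1, hx3] at this
      refine Submodule.eq_of_le_of_finrank_le (fun x hx => ?_) (hW ▸ finrank_span_e_le 1 2)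
      rw [Submodule.mem_span_pair]
      refine ⟨x 1, x 2, ?_⟩
      ext i
      fin_cases i <;> simp [e, hx0 x hx, hall3 x hx]
  · rintro (rfl | rfl) x hx <;> rw [Submodule.mem_span_pair] at hx <;>
      obtain ⟨a, b, rfl⟩ := hx <;> simp [e]
end

section
/- Let f6 = t0²·t2 + t1²·t3 in ℂ[t0,t1,t2,t3] and let L = {x ∈ ℂ⁴ : x0 = 0 and x1 = 0}. For every 3-dimensional ℂ-subspace H of ℂ⁴ with L ⊆ H, there exists a point x ∈ H with f6(x) = 0 and x ∉ L. (Geometrically: every plane in ℙ³ containing the singular line L of the non-normal cubic surface X6 = {f6 = 0} meets X6 in a strictly larger set than L; in particular no plane cuts X6 in 3L, so L is not a triple line on X6.) -/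
open MvPolynomial

noncomputable def cubicX6 : MvPolynomial (Fin 4) ℂ :=
  X 0 ^ 2 * X 2 + X 1 ^ 2 * X 3

theorem cubicX6_no_triple_line (H : Submodule ℂ (Fin 4 → ℂ))
    (hH : Module.finrank ℂ H = 3)
    (hL : {x : Fin 4 → ℂ | x 0 = 0 ∧ x 1 = 0} ⊆ (H : Set (Fin 4 → ℂ))) :
    ∃ x ∈ H, eval x cubicX6 = 0 ∧ x ∉ {x : Fin 4 → ℂ | x 0 = 0 ∧ x 1 = 0} := by
  have hy : ∃ y ∈ H, ¬ (y 0 = 0 ∧ y 1 = 0) := by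
    by_contra hcon
    push Not at hcon
    have hle : H ≤ Submodule.span ℂ
        (({Pi.single 2 1, Pi.single 3 1} : Finset (Fin 4 → ℂ)) : Set (Fin 4 → ℂ)) := by
      intro y hy
      obtain ⟨h0, h1⟩ := hcon y hy
      have : y = y 2 • (Pi.single 2 1 : Fin 4 → ℂ) + y 3 • (Pi.single 3 1 : Fin 4 → ℂ) := by
        ext i
        fin_cases i <;> simp [h0, h1]
      rw [this]
      refine Submodule.add_mem _ (Submodule.smul_mem _ _ (Submodule.subset_span ?_))
        (Submodule.smul_mem _ _ (Submodule.subset_span ?_)) <;> simp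
    have h1 := Submodule.finrank_mono hle
    have h2 := finrank_span_finset_le_card (R := ℂ)
      ({Pi.single 2 1, Pi.single 3 1} : Finset (Fin 4 → ℂ))
    have h3 := Finset.card_le_two (a := (Pi.single 2 1 : Fin 4 → ℂ)) (b := Pi.single 3 1)
    rw [Set.finrank] at h2
    omega
  obtain ⟨y, hyH, hy⟩ := hy
  have hz : (![0, 0, y 2, y 3] : Fin 4 → ℂ) ∈ H := hL (by simp)
  refine ⟨y - ![0, 0, y 2, y 3], H.sub_mem hyH hz, ?_, ?_⟩
  · simp [cubicX6, -Matrix.sub_cons]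
  · simpa [-Matrix.sub_cons] using hy
end

section
/- Let f7 = t0·t1·t2 + t0²·t3 + t1³ in ℂ[t0,t1,t2,t3] and let L = {x ∈ ℂ⁴ : x0 = 0 and x1 = 0}. For every 3-dimensional ℂ-subspace H of ℂ⁴ with L ⊆ H, one has {x ∈ H : f7(x) = 0} = L if and only if H = {x ∈ ℂ⁴ : x0 = 0}. (Geometrically: the plane {t0 = 0} is the unique plane in ℙ³ whose intersection with the non-normal cubic surface X7 = {f7 = 0} is set-theoretically the line L; on this plane the intersection is 3L, so there is a unique plane making L a triple line.) -/
open MvPolynomial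

noncomputable def cubicX7 : MvPolynomial (Fin 4) ℂ :=
  X 0 * X 1 * X 2 + X 0 ^ 2 * X 3 + X 1 ^ 3

theorem cubicX7_unique_triple_plane (H : Submodule ℂ (Fin 4 → ℂ))
    (hH : Module.finrank ℂ H = 3)
    (hL : {x : Fin 4 → ℂ | x 0 = 0 ∧ x 1 = 0} ⊆ (H : Set (Fin 4 → ℂ))) :
    {x : Fin 4 → ℂ | x ∈ H ∧ eval x cubicX7 = 0} = {x : Fin 4 → ℂ | x 0 = 0 ∧ x 1 = 0} ↔
      (H : Set (Fin 4 → ℂ)) = {x : Fin 4 → ℂ | x 0 = 0} := by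
  constructor
  · intro h
    have hle : H ≤ LinearMap.ker (LinearMap.proj 0 : (Fin 4 → ℂ) →ₗ[ℂ] ℂ) := by
      intro x hx
      rw [LinearMap.mem_ker, LinearMap.proj_apply]
      by_contra h0
      have hd : (![0, 0, -x 2, -x 1 ^ 3 / x 0 ^ 2 - x 3] : Fin 4 → ℂ) ∈ H :=
        hL (by simp)
      have hy := H.add_mem hx hd
      have hm : x + ![0, 0, -x 2, -x 1 ^ 3 / x 0 ^ 2 - x 3] ∈
          {x : Fin 4 → ℂ | x ∈ H ∧ eval x cubicX7 = 0} := by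
        refine ⟨hy, ?_⟩
        simp [cubicX7, -Matrix.add_cons]
        field_simp
        ring
      rw [h] at hm
      exact h0 (by simpa using hm.1)
    have hlt : Module.finrank ℂ (LinearMap.ker (LinearMap.proj 0 : (Fin 4 → ℂ) →ₗ[ℂ] ℂ)) < 4 := by
      have := Submodule.finrank_lt
        (s := LinearMap.ker (LinearMap.proj 0 : (Fin 4 → ℂ) →ₗ[ℂ] ℂ)) (by
          intro ht
          have h1 : (fun _ => 1 : Fin 4 → ℂ) ∈
              LinearMap.ker (LinearMap.proj 0 : (Fin 4 → ℂ) →ₗ[ℂ] ℂ) := by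
            rw [ht]; trivial
          simp at h1)
      simpa using this
    have heq := Submodule.eq_of_le_of_finrank_le hle (by omega)
    rw [heq]
    ext x
    simp
  · intro h
    have hx : ∀ x, x ∈ H ↔ x 0 = 0 := fun x => by
      rw [← SetLike.mem_coe, h]; rfl
    ext x
    simp only [Set.mem_setOf_eq, hx]
    refine and_congr_right fun h0 => ?_
    simp [cubicX7, h0]
end

section
/- Let f8 = t1³ + t2³ + t1·t2·t3 in ℂ[t0,t1,t2,t3] and let L = {x ∈ ℂ⁴ : x1 = 0 and x2 = 0}. For every 3-dimensional ℂ-subspace H of ℂ⁴ with L ⊆ H, one has {x ∈ H : f8(x) = 0} = L if and only if H = {x ∈ ℂ⁴ : x1 = 0} or H = {x ∈ ℂ⁴ : x2 = 0}. (Geometrically: there are exactly two planes in ℙ³ whose intersection with the non-normal cubic surface X8 = {f8 = 0} is set-theoretically the line L; on each of these planes the intersection is 3L, so there are exactly two planes making L a triple line.) -/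
open MvPolynomial

noncomputable def cubicX8 : MvPolynomial (Fin 4) ℂ :=
  X 1 ^ 3 + X 2 ^ 3 + X 1 * X 2 * X 3

theorem plane_eq_of_coord (H : Submodule ℂ (Fin 4 → ℂ)) (hH : Module.finrank ℂ H = 3)
    (i : Fin 4) (h : ∀ x ∈ H, x i = 0) :
    (H : Set (Fin 4 → ℂ)) = {x : Fin 4 → ℂ | x i = 0} := by
  have hle : H ≤ LinearMap.ker (LinearMap.proj i : (Fin 4 → ℂ) →ₗ[ℂ] ℂ) := by
    intro x hx
    simpa using h x hx
  have hr : LinearMap.range (LinearMap.proj i : (Fin 4 → ℂ) →ₗ[ℂ] ℂ) = ⊤ :=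
    LinearMap.range_eq_top.2 (fun c => ⟨fun _ => c, rfl⟩)
  have hk := LinearMap.finrank_range_add_finrank_ker (LinearMap.proj i : (Fin 4 → ℂ) →ₗ[ℂ] ℂ)
  rw [hr, finrank_top, Module.finrank_self, Module.finrank_fin_fun] at hk
  have he := Submodule.eq_of_le_of_finrank_eq hle (by omega)
  rw [he]
  ext x
  simp

theorem cubicX8_two_triple_planes (H : Submodule ℂ (Fin 4 → ℂ))
    (hH : Module.finrank ℂ H = 3)
    (hL : {x : Fin 4 → ℂ | x 1 = 0 ∧ x 2 = 0} ⊆ (H : Set (Fin 4 → ℂ))) :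
    {x : Fin 4 → ℂ | x ∈ H ∧ eval x cubicX8 = 0} = {x : Fin 4 → ℂ | x 1 = 0 ∧ x 2 = 0} ↔
      ((H : Set (Fin 4 → ℂ)) = {x : Fin 4 → ℂ | x 1 = 0} ∨
       (H : Set (Fin 4 → ℂ)) = {x : Fin 4 → ℂ | x 2 = 0}) := by
  have hev : ∀ x : Fin 4 → ℂ, eval x cubicX8 = x 1 ^ 3 + x 2 ^ 3 + x 1 * x 2 * x 3 := by
    intro x
    simp [cubicX8]
  constructor
  · intro heq
    have key : ∀ x ∈ H, x 1 = 0 ∨ x 2 = 0 := by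
      intro x hx
      by_contra! hne
      obtain ⟨h1, h2⟩ := hne
      let d : Fin 4 → ℂ := ![0, 0, 0, -(x 1 ^ 3 + x 2 ^ 3) / (x 1 * x 2) - x 3]
      have hd : d ∈ H := hL ⟨by simp [d], by simp [d]⟩
      have hmem : x + d ∈ {x : Fin 4 → ℂ | x ∈ H ∧ eval x cubicX8 = 0} := by
        refine ⟨H.add_mem hx hd, ?_⟩
        rw [hev]
        simp [d]
        field_simp
        ring
      rw [heq] at hmem
      exact h1 (by simpa [d] using hmem.1)
    by_cases hc : ∀ x ∈ H, x 1 = 0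
    · exact Or.inl (plane_eq_of_coord H hH 1 hc)
    · right
      apply plane_eq_of_coord H hH 2
      push Not at hc
      obtain ⟨x, hx, hx1⟩ := hc
      have hx2 := (key x hx).resolve_left hx1
      intro y hy
      rcases key y hy with h | h
      · have := key (x + y) (H.add_mem hx hy)
        simpa [h, hx1, hx2] using this
      · exact h
  · intro h
    ext x
    constructor
    · rintro ⟨hx, hf⟩
      rw [hev] at hf
      rcases h with h | h
      · have h1 : x 1 = 0 := by
          have : x ∈ (H : Set (Fin 4 → ℂ)) := hx
          rwa [h] at this
        exact ⟨h1, by simpa [h1] using hf⟩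
      · have h2 : x 2 = 0 := by
          have : x ∈ (H : Set (Fin 4 → ℂ)) := hx
          rwa [h] at this
        exact ⟨by simpa [h2] using hf, h2⟩
    · intro hx
      refine ⟨hL hx, ?_⟩
      rw [hev, hx.1, hx.2]
      ring
end
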